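/- Let C be a quasicategory. An object X of C is a terminal object, i.e. the projection C_{/X} → C is a trivial Kan fibration, if and only if for every object X′ of C the mapping space Hom_C(X′, X) is a contractible Kan complex. -/

import Mathlib

open CategoryTheory Simplicial Opposite

namespace SSetPaper

universe u

/-- Extend a morphism of `SimplexCategory` by one extra top vertex on each side,
sending the new top vertex to the new top vertex. -/
def joinPt {x y : SimplexCategory} (u : x ⟶ y) :
    (⦋x.len + 1⦌ : SimplexCategory) ⟶ ⦋y.len + 1⦌ :=
  SimplexCategory.mkHom
    { toFun := fun i =>
        if h : (i : ℕ) < x.len + 1 then (u.toOrderHom ⟨i, h⟩).castSucc else Fin.last _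
      monotone' := by
        intro i j hij
        dsimp only
        split_ifs with hi hj hj
        · exact Fin.castSucc_le_castSucc_iff.mpr (u.toOrderHom.monotone hij)
        · exact Fin.le_last _
        · exact absurd (lt_of_le_of_lt (show (i : ℕ) ≤ j from hij) hj) hi
        · exact le_rfl }

lemma joinPt_apply_of_lt {x y : SimplexCategory} (u : x ⟶ y) (i : Fin (x.len + 2))
    (h : (i : ℕ) < x.len + 1) :
    (joinPt u).toOrderHom i = (u.toOrderHom ⟨i, h⟩).castSucc :=
  dif_pos h

lemma joinPt_apply_of_ge {x y : SimplexCategory} (u : x ⟶ y) (i : Fin (x.len + 2))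
    (h : ¬ (i : ℕ) < x.len + 1) :
    (joinPt u).toOrderHom i = Fin.last (y.len + 1) :=
  dif_neg h

lemma joinPt_id (x : SimplexCategory) :
    joinPt (𝟙 x) = 𝟙 (⦋x.len + 1⦌ : SimplexCategory) := by
  apply SimplexCategory.Hom.ext
  apply OrderHom.ext
  funext i
  by_cases h : (i : ℕ) < x.len + 1
  · rw [joinPt_apply_of_lt _ i h]
    exact Fin.ext (by simp)
  · rw [joinPt_apply_of_ge _ i h]
    have hi := i.isLt
    simp only [SimplexCategory.len_mk] at hi
    refine Fin.ext ?_
    simp only [Fin.val_last, SimplexCategory.id_toOrderHom, OrderHom.id_coe, id_eq]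
    omega

lemma joinPt_comp {x y z : SimplexCategory} (u : x ⟶ y) (v : y ⟶ z) :
    joinPt (u ≫ v) = joinPt u ≫ joinPt v := by
  apply SimplexCategory.Hom.ext
  apply OrderHom.ext
  funext i
  rw [SimplexCategory.comp_toOrderHom, OrderHom.comp_coe]
  show (joinPt (u ≫ v)).toOrderHom i = (joinPt v).toOrderHom ((joinPt u).toOrderHom i)
  by_cases h : (i : ℕ) < x.len + 1
  · rw [joinPt_apply_of_lt (u ≫ v) i h, joinPt_apply_of_lt u i h,
      joinPt_apply_of_lt v _ (by simpa using (u.toOrderHom ⟨i, h⟩).isLt)]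
    rw [SimplexCategory.comp_toOrderHom, OrderHom.comp_coe]
    rfl
  · rw [joinPt_apply_of_ge (u ≫ v) i h, joinPt_apply_of_ge u i h,
      joinPt_apply_of_ge v _ (by simp)]

/-- The inclusion of `x` into `[x.len + 1]` as the initial segment
(the face opposite the final vertex). -/
def botIncl (x : SimplexCategory) : x ⟶ ⦋x.len + 1⦌ :=
  SimplexCategory.Hom.mk
    { toFun := Fin.castSucc
      monotone' := fun _ _ h => Fin.castSucc_le_castSucc_iff.mpr h }

/-- The final vertex of `[x.len + 1]`. -/
def lastVtx (x : SimplexCategory) : (⦋0⦌ : SimplexCategory) ⟶ ⦋x.len + 1⦌ :=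
  SimplexCategory.const ⦋0⦌ ⦋x.len + 1⦌ (Fin.last (x.len + 1))

lemma botIncl_joinPt {x y : SimplexCategory} (u : x ⟶ y) :
    botIncl x ≫ joinPt u = u ≫ botIncl y := by
  apply SimplexCategory.Hom.ext
  apply OrderHom.ext
  funext i
  rw [SimplexCategory.comp_toOrderHom, OrderHom.comp_coe, SimplexCategory.comp_toOrderHom,
    OrderHom.comp_coe]
  show (joinPt u).toOrderHom ((botIncl x).toOrderHom i)
      = (botIncl y).toOrderHom (u.toOrderHom i)
  have hlt : ((botIncl x).toOrderHom i : ℕ) < x.len + 1 := by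
    show ((Fin.castSucc i : Fin (x.len + 2)) : ℕ) < x.len + 1
    simpa using i.isLt
  rw [joinPt_apply_of_lt _ _ hlt]
  have e : (⟨((botIncl x).toOrderHom i : ℕ), hlt⟩ : Fin (x.len + 1)) = i := Fin.ext rfl
  rw [e]
  rfl

lemma lastVtx_joinPt {x y : SimplexCategory} (u : x ⟶ y) :
    lastVtx x ≫ joinPt u = lastVtx y := by
  apply SimplexCategory.Hom.ext
  apply OrderHom.ext
  funext i
  rw [SimplexCategory.comp_toOrderHom, OrderHom.comp_coe]
  show (joinPt u).toOrderHom ((lastVtx x).toOrderHom i) = (lastVtx y).toOrderHom i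
  have hge : ¬ (((lastVtx x).toOrderHom i : ℕ) < x.len + 1) := by
    show ¬ (((Fin.last (x.len + 1) : Fin (x.len + 2)) : ℕ) < x.len + 1)
    simp
  rw [joinPt_apply_of_ge _ _ hge]
  rfl

lemma toZero_unique {x : SimplexCategory} (f g : x ⟶ ⦋0⦌) : f = g := by
  apply SimplexCategory.Hom.ext
  apply OrderHom.ext
  funext i
  have h1 := (f.toOrderHom i).isLt
  have h2 := (g.toOrderHom i).isLt
  simp only [SimplexCategory.len_mk] at h1 h2
  exact Fin.ext (by omega)

/-- The mapping space `Hom_C(X,Y)`: its `k`-simplices are the `(k+1)`-simplices of `C`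
whose face opposite the final vertex is the totally degenerate `k`-simplex at `X` and whose
final vertex is `Y`, with faces and degeneracies inherited from `C`. -/
def RightHom (C : SSet.{u}) (X Y : C _⦋0⦌) : SSet.{u} where
  obj a := { σ : C.obj (op ⦋a.unop.len + 1⦌) //
      C.map (botIncl a.unop).op σ = C.map (SimplexCategory.const a.unop ⦋0⦌ 0).op X ∧
      C.map (lastVtx a.unop).op σ = Y }
  map {a b} f := ↾fun σ => ⟨C.map (joinPt f.unop).op σ.1, by
    constructor
    · rw [← FunctorToTypes.map_comp_apply, ← op_comp, botIncl_joinPt, op_comp,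
        FunctorToTypes.map_comp_apply, σ.2.1, ← FunctorToTypes.map_comp_apply, ← op_comp,
        toZero_unique (f.unop ≫ SimplexCategory.const a.unop ⦋0⦌ 0)
          (SimplexCategory.const b.unop ⦋0⦌ 0)]
    · rw [← FunctorToTypes.map_comp_apply, ← op_comp, lastVtx_joinPt]
      exact σ.2.2⟩
  map_id a := by
    refine ConcreteCategory.hom_ext _ _ fun σ => ?_
    apply Subtype.ext
    show C.map (joinPt (𝟙 a).unop).op σ.1 = σ.1
    rw [unop_id, joinPt_id, op_id, FunctorToTypes.map_id_apply]
  map_comp {a b c} f g := by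
    refine ConcreteCategory.hom_ext _ _ fun σ => ?_
    apply Subtype.ext
    show C.map (joinPt (f ≫ g).unop).op σ.1 = C.map (joinPt g.unop).op (C.map (joinPt f.unop).op σ.1)
    rw [unop_comp, joinPt_comp, op_comp, FunctorToTypes.map_comp_apply]


/-- The slice `C_{/X}`: its `n`-simplices are the `(n+1)`-simplices of `C` whose final
vertex is `X`, with faces and degeneracies inherited from `C`. -/
def Slice (C : SSet.{u}) (X : C _⦋0⦌) : SSet.{u} where
  obj a := { σ : C.obj (op ⦋a.unop.len + 1⦌) // C.map (lastVtx a.unop).op σ = X }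
  map {a b} f := ↾fun σ => ⟨C.map (joinPt f.unop).op σ.1, by
    rw [← FunctorToTypes.map_comp_apply, ← op_comp, lastVtx_joinPt]
    exact σ.2⟩
  map_id a := by
    refine ConcreteCategory.hom_ext _ _ fun σ => ?_
    apply Subtype.ext
    show C.map (joinPt (𝟙 a).unop).op σ.1 = σ.1
    rw [unop_id, joinPt_id, op_id, FunctorToTypes.map_id_apply]
  map_comp {a b c} f g := by
    refine ConcreteCategory.hom_ext _ _ fun σ => ?_
    apply Subtype.ext
    show C.map (joinPt (f ≫ g).unop).op σ.1
        = C.map (joinPt g.unop).op (C.map (joinPt f.unop).op σ.1)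
    rw [unop_comp, joinPt_comp, op_comp, FunctorToTypes.map_comp_apply]

/-- The projection `C_{/X} ⟶ C`, sending an `(n+1)`-simplex with final vertex `X` to its
face opposite the final vertex. -/
def sliceProj (C : SSet.{u}) (X : C _⦋0⦌) : Slice C X ⟶ C where
  app a := ↾fun σ => C.map (botIncl a.unop).op σ.1
  naturality a b f := by
    refine ConcreteCategory.hom_ext _ _ fun σ => ?_
    show C.map (botIncl b.unop).op (C.map (joinPt f.unop).op σ.1)
        = C.map f (C.map (botIncl a.unop).op σ.1)
    rw [← FunctorToTypes.map_comp_apply, ← op_comp, botIncl_joinPt, op_comp,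
      FunctorToTypes.map_comp_apply]
    rfl

/-- A map of simplicial sets is a trivial Kan fibration if every commutative square
whose left edge is a boundary inclusion `∂Δ[n] ⊆ Δ[n]` admits a diagonal lift. -/
def IsTrivialKanFibration {X Y : SSet.{0}} (p : X ⟶ Y) : Prop :=
  ∀ (n : ℕ) (t : (∂Δ[n] : SSet) ⟶ X) (b : (Δ[n] : SSet) ⟶ Y),
    t ≫ p = (SSet.boundary n).ι ≫ b →
    ∃ l : (Δ[n] : SSet) ⟶ X, (SSet.boundary n).ι ≫ l = t ∧ l ≫ p = b

/-- An object `X` of a quasicategory `C` is terminal if the projection `C_{/X} ⟶ C`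
is a trivial Kan fibration. -/
def IsTerminalObject (C : SSet.{0}) (X : C _⦋0⦌) : Prop :=
  IsTrivialKanFibration (sliceProj C X)

/-- A simplicial set is contractible if every map `∂Δ[n] ⟶ S` extends to `Δ[n] ⟶ S`
(equivalently, the map `S ⟶ Δ[0]` is a trivial Kan fibration). -/
def IsContractible (S : SSet.{0}) : Prop :=
  ∀ (n : ℕ) (t : (∂Δ[n] : SSet) ⟶ S), ∃ l : (Δ[n] : SSet) ⟶ S, (SSet.boundary n).ι ≫ l = t

/-- A simplicial set `S` is a Kan complex if for every `n : ℕ` and `0 ≤ i ≤ n` every map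
`Λ[n, i] ⟶ S` extends to `Δ[n] ⟶ S` (the definition of `SSet.KanComplex` in the older
Mathlib, which includes the case `n = 0`). -/
class KanComplex (S : SSet.{u}) : Prop where
  hornFilling : ∀ ⦃n : ℕ⦄ ⦃i : Fin (n + 1)⦄ (σ₀ : (Λ[n, i] : SSet) ⟶ S),
    ∃ σ : Δ[n] ⟶ S, σ₀ = (SSet.horn n i).ι ≫ σ

end SSetPaper

/-!
The projection `C_{/X} ⟶ C` is a right fibration: lifting `Λ[n + 1, i]` with `0 < i` against it
means filling the horn `Λ[n + 2, i]` of `C`, which is inner. Its fibres are the mapping spaces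
`Hom_C(X', X)`. So it suffices that a right fibration `p : P ⟶ B` with contractible fibres is a
trivial Kan fibration.

Fix `b : Δ[n] ⟶ B`. The maps `j ↦ j - k` (truncated) deform `b` to the constant simplex at its
initial vertex, over which spheres can be filled by assumption. Successive stages of the deformation
are the faces of some `τ : Δ[n + 1] ⟶ B` opposite to vertices `i < v` with `0 < i`, so it remains to
transport filling problems from the face `i` to the face `v`. The subcomplex `A = Λ[i] ∩ Λ[v]` of
`Δ[n + 1]` meets each of these two faces in its boundary, and `A ∪ face v = Λ[i]`. The
inclusion into `A` of the boundary of the face `i` is right anodyne, since the missing simplices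
come in pairs `S`, `S ∪ {v}` and are attached along horns `Λ[m, w]` with `0 < w` because `i ∈ S`.
Hence a partial lift on this boundary extends to `A`, then over the face `v`, then to `Δ[n + 1]`.
-/

namespace SSetPaper

open SSet SSet.stdSimplex Limits

lemma isPushout_sup_range {X Y : SSet.{u}} (A : X.Subcomplex) (f : Y ⟶ X) [Mono f] :
    IsPushout (A.fromPreimage f) (A.preimage f).ι
      (Subcomplex.homOfLE (le_sup_left : A ≤ A ⊔ Subcomplex.range f))
      (Subcomplex.lift f le_sup_right) where
  w := rfl
  isColimit' := ⟨evaluationJointlyReflectsColimits _ fun d ↦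
    (isColimitMapCoconePushoutCoconeEquiv _ _).symm <| IsPushout.isColimit <| by
      have hf : Function.Injective (f.app d) := (mono_iff_injective _).1 inferInstance
      refine Types.isPushout_of_isPullback_of_mono' ?_ (Set.eq_univ_of_forall ?_)
        fun _ _ _ _ h ↦ hf (congr_arg Subtype.val h)
      · refine Types.isPullback_iff _ _ _ _ |>.2 ⟨rfl, fun _ _ h ↦ Subtype.ext h.2, ?_⟩
        rintro ⟨_, ha⟩ y h
        obtain rfl := congr_arg Subtype.val h
        exact ⟨⟨y, ha⟩, rfl, rfl⟩
      · rintro ⟨x, hx | ⟨y, rfl⟩⟩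
        exacts [Or.inl ⟨⟨x, hx⟩, rfl⟩, Or.inr ⟨y, rfl⟩]⟩

lemma ofSimplex_eq_face {n d : ℕ} (x : (Δ[n] : SSet.{u}) _⦋d⦌) :
    Subcomplex.ofSimplex x = face (Finset.univ.image x) := by
  obtain ⟨m, f, hf, y, rfl⟩ := SSet.exists_nonDegenerate _ x
  rw [Subcomplex.ofSimplex_map_of_epi, ← face_nonDegenerateEquiv']
  congr 1
  ext j
  rw [stdSimplex.nonDegenerateEquiv'_iff]
  rw [SimplexCategory.epi_iff_surjective] at hf
  simp only [Finset.mem_image, Finset.mem_univ, true_and]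
  exact hf.exists

lemma mem_iff_face_le {n d : ℕ} (A : (Δ[n] : SSet.{u}).Subcomplex)
    (x : (Δ[n] : SSet.{u}) _⦋d⦌) :
    x ∈ A.obj _ ↔ face (Finset.univ.image x) ≤ A := by
  rw [← ofSimplex_eq_face, Subcomplex.ofSimplex_le_iff]

lemma le_of_forall_face_le {n : ℕ} {A B : (Δ[n] : SSet.{u}).Subcomplex}
    (h : ∀ S, face S ≤ A → face S ≤ B) : A ≤ B := by
  rintro ⟨d⟩ x hx
  induction d using SimplexCategory.rec with | _ d
  exact (mem_iff_face_le B x).2 (h _ ((mem_iff_face_le A x).1 hx))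

/-- The horn inclusions `Λ[n, i] ⊆ Δ[n]` with `0 < i ≤ n`, which generate the right anodyne
extensions. -/
inductive rightHornInclusions : MorphismProperty SSet.{u} where
  | intro {n : ℕ} (i : Fin (n + 2)) (h0 : 0 < i) : rightHornInclusions Λ[n + 1, i].ι

/-- Right fibrations of simplicial sets. -/
def rightFibrations : MorphismProperty SSet.{u} := rightHornInclusions.rlp

/-- Right anodyne extensions, encoded by their lifting property against right fibrations rather than
as the saturation of the right horn inclusions. -/
def rightAnodyneExtensions : MorphismProperty SSet.{u} := rightFibrations.llp
deriving MorphismProperty.IsMultiplicative, MorphismProperty.RespectsIso,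
  MorphismProperty.IsStableUnderCobaseChange

lemma rightAnodyneExtensions.horn_ι {n : ℕ} {i : Fin (n + 2)} (h0 : 0 < i) :
    rightAnodyneExtensions.{u} Λ[n + 1, i].ι :=
  MorphismProperty.le_llp_rlp _ _ (.intro i h0)

lemma face_le_sup_iff {n : ℕ} (S : Finset (Fin (n + 1))) (A B : (Δ[n] : SSet.{u}).Subcomplex) :
    face S ≤ A ⊔ B ↔ face S ≤ A ∨ face S ≤ B := by
  obtain rfl | hS := S.eq_empty_or_nonempty
  · simp
  · obtain ⟨d, hd⟩ := Nat.exists_eq_succ_of_ne_zero hS.card_pos.ne'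
    simp only [← nonDegenerateEquiv'_symm_mem_iff_face_le ⟨S, hd⟩]
    rfl

lemma exists_mono_range_eq_face {n m : ℕ} {T : Finset (Fin (n + 1))} (hT : T.card = m + 1) :
    ∃ (f : (Δ[m] : SSet.{u}) ⟶ Δ[n]) (e : Fin (m + 1) ≃o T),
      Mono f ∧ Subcomplex.range f = face T ∧
      ∀ {d : ℕ} (y : (Δ[m] : SSet.{u}) _⦋d⦌) (j : Fin (d + 1)), f.app _ y j = e (y j) := by
  let e := T.orderIsoOfFin hT
  let g : ⦋m⦌ ⟶ ⦋n⦌ :=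
    SimplexCategory.mkHom ((OrderHom.Subtype.val _).comp e.toOrderEmbedding.toOrderHom)
  refine ⟨SSet.stdSimplex.map g, e, ?_, ?_, fun _ _ ↦ rfl⟩
  · refine (NatTrans.mono_iff_mono_app _).2 fun d ↦ (mono_iff_injective _).2 fun y y' h ↦ ?_
    induction d with | _ d
    induction d using SimplexCategory.rec with | _ d
    exact SSet.stdSimplex.ext _ _ fun j ↦ e.injective <| Subtype.ext <|
      DFunLike.congr_fun (F := Δ[n] _⦋d⦌) h j
  · rw [Subcomplex.range_eq_ofSimplex, face_eq_ofSimplex _ _ e]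
    rfl

lemma rightAnodyneExtensions_homOfLE_sup_face {n : ℕ} {A : (Δ[n] : SSet.{u}).Subcomplex}
    {T : Finset (Fin (n + 1))} {v k : Fin (n + 1)} (hv : v ∈ T) (hk : k ∈ T) (hkv : k < v)
    (hA : ∀ S ⊆ T, face S ≤ A ↔ ¬ T.erase v ⊆ S) :
    rightAnodyneExtensions (Subcomplex.homOfLE (le_sup_left : A ≤ A ⊔ face T)) := by
  obtain ⟨m, hm⟩ : ∃ m, T.card = m + 2 :=
    Nat.exists_eq_add_of_le' (Finset.one_lt_card.2 ⟨v, hv, k, hk, hkv.ne'⟩)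
  obtain ⟨f, e, _, hfT, hf⟩ := exists_mono_range_eq_face.{u} hm
  have hhorn : A.preimage f = Λ[m + 1, e.symm ⟨v, hv⟩] := by
    ext ⟨d⟩ y
    induction d using SimplexCategory.rec with | _ d
    have hT : Finset.univ.image (f.app _ y) ⊆ T := by
      simp [Finset.image_subset_iff, hf]
    rw [Subcomplex.preimage_obj, Set.mem_preimage, mem_iff_face_le, hA _ hT,
      mem_horn_iff_notMem_range, Finset.not_subset]
    constructor
    · rintro ⟨t, ht, hty⟩
      rw [Finset.mem_erase] at ht
      refine ⟨e.symm ⟨t, ht.2⟩, by simpa using ht.1, ?_⟩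
      rintro ⟨j, hj⟩
      exact hty (Finset.mem_image.2 ⟨j, by simp [hf, hj]⟩)
    · rintro ⟨j, hjv, hj⟩
      refine ⟨e j, Finset.mem_erase.2 ⟨fun h ↦ hjv (by simp [← h]), (e j).2⟩, ?_⟩
      exact fun hmem ↦ hj <| by simpa [hf] using hmem
  rw [← hfT]
  refine MorphismProperty.of_isPushout (isPushout_sup_range A f) ?_
  rw [hhorn]
  have hkv' : (⟨k, hk⟩ : T) < ⟨v, hv⟩ := hkv
  exact .horn_ι ((Fin.zero_le _).trans_lt (e.symm.lt_iff_lt.2 hkv'))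

lemma rightAnodyneExtensions_homOfLE_of_cone {n : ℕ} {A B : (Δ[n] : SSet.{u}).Subcomplex}
    (hAB : A ≤ B) (v : Fin (n + 1))
    (h : ∀ S, face S ≤ B → ¬ face S ≤ A →
      face (insert v S) ≤ B ∧ ¬ face (S.erase v) ≤ A ∧ ∃ k ∈ S, k < v) :
    rightAnodyneExtensions (Subcomplex.homOfLE hAB) := by
  classical
  induction hc : (Finset.univ.filter fun S ↦ face S ≤ B ∧ ¬ face S ≤ A).card
    using Nat.strong_induction_on generalizing A with | _ c ih
  set 𝓕 := Finset.univ.filter fun S ↦ face S ≤ B ∧ ¬ face S ≤ A with h𝓕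
  have mem_𝓕 {S} : S ∈ 𝓕 ↔ face S ≤ B ∧ ¬ face S ≤ A := by simp [h𝓕]
  obtain he | hne := 𝓕.eq_empty_or_nonempty
  · obtain rfl : A = B := hAB.antisymm <| le_of_forall_face_le fun S hS ↦ by
      by_contra hSA
      exact Finset.notMem_empty S (he ▸ mem_𝓕.2 ⟨hS, hSA⟩)
    exact rightAnodyneExtensions.id_mem _
  -- A minimal missing face `S` does not contain `v`, and `insert v S` meets `A` in its `v`-th horn.
  obtain ⟨S, hS, hmin⟩ := Finset.exists_minimal hne
  have erase_mem {R} (hR : R ∈ 𝓕) : R.erase v ∈ 𝓕 := by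
    rw [mem_𝓕] at hR ⊢
    exact ⟨((face_le_face_iff _ _).2 (R.erase_subset v)).trans hR.1, (h R hR.1 hR.2).2.1⟩
  have hvS : v ∉ S := fun hv ↦ Finset.notMem_erase v S (hmin (erase_mem hS) (S.erase_subset v) hv)
  obtain ⟨hSB, -, k, hkS, hkv⟩ := h S (mem_𝓕.1 hS).1 (mem_𝓕.1 hS).2
  have hattach := rightAnodyneExtensions_homOfLE_sup_face.{u} (A := A)
    (Finset.mem_insert_self v S) (Finset.mem_insert_of_mem hkS) hkv fun R hR ↦ by
      rw [Finset.erase_insert hvS]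
      refine ⟨fun hRA hSR ↦ (mem_𝓕.1 hS).2 (((face_le_face_iff _ _).2 hSR).trans hRA),
        not_imp_comm.1 fun hRA ↦ ?_⟩
      have hR𝓕 := mem_𝓕.2 ⟨((face_le_face_iff _ _).2 hR).trans hSB, hRA⟩
      exact (hmin (erase_mem hR𝓕) (Finset.subset_insert_iff.1 hR)).trans (R.erase_subset v)
  have hrest := ih _ ?_ (A := A ⊔ face (insert v S)) (sup_le hAB hSB) (fun R hRB hRA ↦ ?_) rfl
  · exact MorphismProperty.comp_mem _ _ _ hattach hrest
  · refine hc ▸ Finset.card_lt_card (Finset.ssubset_iff_of_subset ?_ |>.2 ⟨S, hS, ?_⟩)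
    · intro R hR
      rw [Finset.mem_filter_univ, face_le_sup_iff, not_or] at hR
      exact mem_𝓕.2 ⟨hR.1, hR.2.1⟩
    · rw [Finset.mem_filter_univ, face_le_sup_iff, face_le_face_iff]
      exact fun hS' ↦ hS'.2 (Or.inr (Finset.subset_insert v S))
  · simp only [face_le_sup_iff, face_le_face_iff, not_or] at hRA ⊢
    obtain ⟨hv, hR, hlt⟩ := h R hRB hRA.1
    refine ⟨hv, ⟨hR, fun hle ↦ hRA.2 ?_⟩, hlt⟩
    rwa [Finset.subset_insert_iff, Finset.erase_idem, ← Finset.subset_insert_iff] at hle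

lemma face_le_horn_iff_exists_notMem {n : ℕ} (S : Finset (Fin (n + 2))) (i : Fin (n + 2)) :
    face.{u} S ≤ Λ[n + 1, i] ↔ ∃ j ≠ i, j ∉ S := by
  simp [subcomplex_le_horn_iff, face_le_face_iff, Finset.not_subset]

lemma image_preimage_eq_inf_range {X Y : SSet.{u}} (A : X.Subcomplex) (f : Y ⟶ X) :
    (A.preimage f).image f = A ⊓ Subcomplex.range f :=
  Subfunctor.ext <| funext fun _ ↦ Set.image_preimage_eq_inter_range

lemma rightAnodyneExtensions_fromPreimage {X Y : SSet.{u}} {A : X.Subcomplex} {f : Y ⟶ X} [Mono f]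
    (h : rightAnodyneExtensions
      (Subcomplex.homOfLE (inf_le_left : A ⊓ Subcomplex.range f ≤ A))) :
    rightAnodyneExtensions (A.fromPreimage f) := by
  have : Mono ((A.preimage f).toImage f) :=
    mono_of_mono_fac ((A.preimage f).toImage_ι f)
  have : IsIso ((A.preimage f).toImage f) := isIso_of_mono_of_epi _
  have h' : rightAnodyneExtensions (Subcomplex.homOfLE (A.image_preimage_le f)) := by
    convert h <;> exact image_preimage_eq_inf_range A f
  exact (MorphismProperty.cancel_left_of_respectsIso rightAnodyneExtensions
    ((A.preimage f).toImage f) _).2 h'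

lemma hasLiftingPropertyFixedBot_of_rightAnodyneExtensions {Y Z P B : SSet.{u}}
    {A : Z.Subcomplex} {f g : Y ⟶ Z} [Mono g]
    (hf : rightAnodyneExtensions (A.fromPreimage f))
    (hg : rightAnodyneExtensions (A ⊔ Subcomplex.range g).ι)
    {p : P ⟶ B} (hp : rightFibrations p) (τ : Z ⟶ B)
    (h : HasLiftingPropertyFixedBot (A.preimage g).ι p (g ≫ τ)) :
    HasLiftingPropertyFixedBot (A.preimage f).ι p (f ≫ τ) := by
  intro t sq
  have sqA : CommSq t (A.fromPreimage f) p (A.ι ≫ τ) := ⟨sq.w⟩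
  have := hf p hp
  have sqg : CommSq (A.fromPreimage g ≫ sqA.lift) (A.preimage g).ι p (g ≫ τ) :=
    ⟨by rw [Category.assoc, sqA.fac_right]; rfl⟩
  have := h _ sqg
  let hpo := isPushout_sup_range A g
  let s := hpo.desc sqA.lift sqg.lift sqg.fac_left.symm
  have sqs : CommSq s (A ⊔ Subcomplex.range g).ι p τ := ⟨hpo.hom_ext
    (by rw [hpo.inl_desc_assoc, sqA.fac_right]; rfl)
    (by rw [hpo.inr_desc_assoc, sqg.fac_right]; rfl)⟩
  have := hg p hp
  refine ⟨⟨f ≫ sqs.lift, ?_, by rw [Category.assoc, sqs.fac_right]⟩⟩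
  calc (A.preimage f).ι ≫ f ≫ sqs.lift
      = A.fromPreimage f ≫ Subcomplex.homOfLE le_sup_left ≫
          (A ⊔ Subcomplex.range g).ι ≫ sqs.lift := rfl
    _ = t := by rw [sqs.fac_left, hpo.inl_desc, sqA.fac_left]

lemma horn_preimage_δ_self {n : ℕ} (i : Fin (n + 2)) :
    (Λ[n + 1, i] : (Δ[n + 1] : SSet.{u}).Subcomplex).preimage (stdSimplex.δ i) = ∂Δ[n] := by
  ext ⟨d⟩ x
  induction d using SimplexCategory.rec with | _ d
  rw [Subcomplex.preimage_obj, Set.mem_preimage, mem_horn_iff_notMem_range,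
    mem_boundary_iff_notMem_range]
  constructor
  · rintro ⟨k, hki, hk⟩
    obtain ⟨k, rfl⟩ := Fin.exists_succAbove_eq hki
    exact ⟨k, fun ⟨a, ha⟩ ↦ hk ⟨a, congr_arg i.succAbove ha⟩⟩
  · rintro ⟨k, hk⟩
    exact ⟨i.succAbove k, i.succAbove_ne k,
      fun ⟨a, ha⟩ ↦ hk ⟨a, Fin.succAbove_right_injective ha⟩⟩

lemma horn_preimage_δ {n : ℕ} {i j : Fin (n + 2)} (hij : i ≠ j) :
    (Λ[n + 1, j] : (Δ[n + 1] : SSet.{u}).Subcomplex).preimage (stdSimplex.δ i) = ⊤ := by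
  rw [Subcomplex.preimage_eq_top_iff, range_δ]
  exact face_le_horn i j hij

lemma horn_inf_horn_sup_range_δ {n : ℕ} {i j : Fin (n + 2)} (hij : i ≠ j) :
    (Λ[n + 1, i] ⊓ Λ[n + 1, j] : (Δ[n + 1] : SSet.{u}).Subcomplex) ⊔
      Subcomplex.range (stdSimplex.δ j) = Λ[n + 1, i] := by
  rw [range_δ]
  refine le_antisymm (sup_le inf_le_left (face_le_horn j i hij.symm)) (le_of_forall_face_le ?_)
  intro S hS
  rw [face_le_sup_iff, le_inf_iff, face_le_horn_iff _ j, face_le_face_iff]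
  rw [face_le_horn_iff] at hS ⊢
  by_cases h : S = {j}ᶜ
  · exact Or.inr h.le
  · exact Or.inl ⟨hS, hS.1, h⟩

lemma rightAnodyneExtensions_horn_inf_horn {n : ℕ} {i v : Fin (n + 2)} (hiv : i < v) :
    rightAnodyneExtensions.{u} (Subcomplex.homOfLE (inf_le_left :
      (Λ[n + 1, i] ⊓ Λ[n + 1, v]) ⊓ Subcomplex.range (stdSimplex.δ i) ≤
        Λ[n + 1, i] ⊓ Λ[n + 1, v])) := by
  refine rightAnodyneExtensions_homOfLE_of_cone _ v fun S hS hS' ↦ ?_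
  simp only [range_δ, le_inf_iff, face_le_horn_iff_exists_notMem, face_le_face_iff] at *
  obtain ⟨j, hjv, hj⟩ := hS.2
  have hj' : j ∉ insert v S := Finset.mem_insert.not.2 (not_or.2 ⟨hjv, hj⟩)
  have hi : i ∈ S := not_not.1 fun hi ↦ hS' ⟨hS, Finset.subset_compl_singleton.2 hi⟩
  refine ⟨⟨⟨j, ne_of_mem_of_not_mem hi hj |>.symm, hj'⟩, ⟨j, hjv, hj'⟩⟩, fun h ↦ ?_, i, hi, hiv⟩
  exact Finset.subset_compl_singleton.1 h.2 (Finset.mem_erase.2 ⟨hiv.ne, hi⟩)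

lemma hasLiftingPropertyFixedBot_boundary_of_δ {n : ℕ} {i v : Fin (n + 2)}
    (h0 : 0 < i) (hiv : i < v) {X Y : SSet.{u}} {p : X ⟶ Y} (hp : rightFibrations p)
    (τ : Δ[n + 1] ⟶ Y) (h : HasLiftingPropertyFixedBot ∂Δ[n].ι p (stdSimplex.δ v ≫ τ)) :
    HasLiftingPropertyFixedBot ∂Δ[n].ι p (stdSimplex.δ i ≫ τ) := by
  let A : (Δ[n + 1] : SSet.{u}).Subcomplex := Λ[n + 1, i] ⊓ Λ[n + 1, v]
  have hi : A.preimage (stdSimplex.δ i) = ∂Δ[n] := by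
    rw [Subcomplex.preimage_min, horn_preimage_δ_self, horn_preimage_δ hiv.ne, inf_top_eq]
  have hv : A.preimage (stdSimplex.δ v) = ∂Δ[n] := by
    rw [Subcomplex.preimage_min, horn_preimage_δ_self, horn_preimage_δ hiv.ne', top_inf_eq]
  have hA : rightAnodyneExtensions.{u} (A ⊔ Subcomplex.range (stdSimplex.δ v)).ι := by
    rw [horn_inf_horn_sup_range_δ hiv.ne]
    exact .horn_ι h0
  rw [← hv] at h
  rw [← hi]
  exact hasLiftingPropertyFixedBot_of_rightAnodyneExtensions
    (rightAnodyneExtensions_fromPreimage (rightAnodyneExtensions_horn_inf_horn hiv)) hA hp τ h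

/-- The endomorphism `j ↦ j - k` of `Δ[n]`, with truncated subtraction. As `k` runs from `0` to `n`
it deforms the identity to the constant map at the vertex `0`. -/
def truncatedShift (n k : ℕ) : (Δ[n] : SSet.{u}) ⟶ Δ[n] :=
  SSet.stdSimplex.map <| SimplexCategory.mkHom
    ⟨fun j ↦ ⟨j - k, by omega⟩, fun _ _ h ↦ Nat.sub_le_sub_right h k⟩

lemma truncatedShift_zero (n : ℕ) : truncatedShift.{u} n 0 = 𝟙 _ :=
  CategoryTheory.Functor.map_id _ _

lemma truncatedShift_self (n : ℕ) : truncatedShift.{u} n n = SSet.const (obj₀Equiv.symm 0) := by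
  refine NatTrans.ext (funext fun ⟨d⟩ ↦ ConcreteCategory.hom_ext _ _ fun x ↦ ?_)
  induction d using SimplexCategory.rec with | _ d
  exact SSet.stdSimplex.ext _ _ fun j ↦
    Fin.ext (Nat.sub_eq_zero_of_le (Nat.le_of_lt_succ (x j).is_lt))

lemma δ_last_comp_σ_comp_truncatedShift (n k : ℕ) :
    stdSimplex.δ (Fin.last (n + 2)) ≫ stdSimplex.σ 0 ≫ truncatedShift.{u} (n + 1) k =
      truncatedShift.{u} (n + 1) (k + 1) := by
  refine NatTrans.ext (funext fun ⟨d⟩ ↦ ConcreteCategory.hom_ext _ _ fun x ↦ ?_)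
  induction d using SimplexCategory.rec with | _ d
  refine SSet.stdSimplex.ext _ _ fun j ↦ Fin.ext ?_
  change (Fin.predAbove 0 (Fin.succAbove (Fin.last _) (x j)) : ℕ) - k = (x j : ℕ) - (k + 1)
  rw [Fin.succAbove_last]
  obtain h | h := Fin.eq_zero_or_eq_succ (x j)
  · simp [h]
  · obtain ⟨a, ha⟩ := h
    simp [ha]

/-- All fibres of `p` are contractible: every sphere over a constant simplex has a filling over it.
This avoids forming the fibres as pullbacks. -/
def HasContractibleFibers {X Y : SSet.{u}} (p : X ⟶ Y) : Prop :=
  ∀ (n : ℕ) (y : Y _⦋0⦌), HasLiftingPropertyFixedBot ∂Δ[n].ι p (SSet.const y)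

lemma hasLiftingPropertyFixedBot_of_truncatedShift {X Y : SSet.{u}} {p : X ⟶ Y}
    (hp : rightFibrations p) {n : ℕ} (b : Δ[n + 1] ⟶ Y) (k : ℕ)
    (h : HasLiftingPropertyFixedBot ∂Δ[n + 1].ι p (truncatedShift (n + 1) k ≫ b)) :
    HasLiftingPropertyFixedBot ∂Δ[n + 1].ι p b := by
  induction k with
  | zero => simpa only [truncatedShift_zero, Category.id_comp] using h
  | succ k ih =>
    refine ih ?_
    rw [← δ_last_comp_σ_comp_truncatedShift, Category.assoc, Category.assoc] at h
    rw [← Category.id_comp (truncatedShift (n + 1) k ≫ b),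
      ← stdSimplex.δ_comp_σ_succ (i := 0), Category.assoc]
    exact hasLiftingPropertyFixedBot_boundary_of_δ (Fin.succ_pos 0)
      (Fin.succ_lt_succ_iff.2 (Fin.last_pos)) hp _ h

lemma HasContractibleFibers.hasLiftingProperty {X Y : SSet.{u}} {p : X ⟶ Y}
    (h : HasContractibleFibers p) (hp : rightFibrations p) (n : ℕ) :
    HasLiftingProperty ∂Δ[n].ι p where
  sq_hasLift {t b} sq := by
    have hconst : HasLiftingPropertyFixedBot ∂Δ[n].ι p (truncatedShift n n ≫ b) := by
      rw [truncatedShift_self, const_comp]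
      exact h n _
    cases n with
    | zero =>
      rw [truncatedShift_zero, Category.id_comp] at hconst
      exact hconst t sq
    | succ n => exact hasLiftingPropertyFixedBot_of_truncatedShift hp b _ hconst t sq

lemma isTrivialKanFibration_iff_hasContractibleFibers {X Y : SSet.{0}} {p : X ⟶ Y}
    (hp : rightFibrations p) : IsTrivialKanFibration p ↔ HasContractibleFibers p := by
  constructor
  · intro h n y t sq
    obtain ⟨l, hl, hlp⟩ := h n t _ sq.w
    exact ⟨⟨⟨l, hl, hlp⟩⟩⟩
  · intro h n t b hb
    have := h.hasLiftingProperty hp n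
    have sq : CommSq t ∂Δ[n].ι p b := ⟨hb⟩
    exact ⟨sq.lift, sq.fac_left, sq.fac_right⟩

lemma joinPt_δ {n : ℕ} (i : Fin (n + 2)) :
    joinPt (SimplexCategory.δ i) = SimplexCategory.δ i.castSucc := by
  ext j : 3
  induction j using Fin.lastCases with
  | last =>
    rw [joinPt_apply_of_ge _ _ (by simp)]
    exact (Fin.succAbove_ne_last_last (Fin.castSucc_ne_last i)).symm
  | cast j =>
    rw [joinPt_apply_of_lt _ _ j.isLt]
    exact (Fin.castSucc_succAbove_castSucc (i := i) (j := j)).symm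

section

variable {C : SSet.{u}} {X : C _⦋0⦌}

namespace Slice

/-- The universal property of the slice: `n`-simplices of `C_{/X}` are `(n + 1)`-simplices of `C`
with final vertex `X`, both viewed as maps out of standard simplices. -/
def homEquiv {n : ℕ} : (Δ[n] ⟶ Slice C X) ≃
    {y : Δ[n + 1] ⟶ C // C.map (lastVtx ⦋n⦌).op (yonedaEquiv y) = X} :=
  yonedaEquiv.trans (yonedaEquiv.symm.subtypeEquiv fun _ ↦ by rw [Equiv.apply_symm_apply])

lemma yonedaEquiv_homEquiv {n : ℕ} (σ : Δ[n] ⟶ Slice C X) :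
    yonedaEquiv (homEquiv σ).1 = (yonedaEquiv σ).1 :=
  Equiv.apply_symm_apply SSet.yonedaEquiv _

lemma map_lastVtx_δ_comp {n : ℕ} (i : Fin (n + 2)) (y : Δ[n + 2] ⟶ C) :
    C.map (lastVtx ⦋n⦌).op (yonedaEquiv (stdSimplex.δ i.castSucc ≫ y)) =
      C.map (lastVtx ⦋n + 1⦌).op (yonedaEquiv y) := by
  rw [stdSimplex.yonedaEquiv_δ_comp, SimplicialObject.δ_def, ← joinPt_δ,
    ← Functor.map_comp_apply, ← op_comp, lastVtx_joinPt]

lemma homEquiv_δ_comp {n : ℕ} (i : Fin (n + 2)) (σ : Δ[n + 1] ⟶ Slice C X) :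
    (homEquiv (stdSimplex.δ i ≫ σ)).1 = stdSimplex.δ i.castSucc ≫ (homEquiv σ).1 := by
  refine yonedaEquiv.injective ?_
  rw [stdSimplex.yonedaEquiv_δ_comp, yonedaEquiv_homEquiv, yonedaEquiv_homEquiv,
    stdSimplex.yonedaEquiv_δ_comp]
  exact congr_arg (fun f ↦ C.map f.op (yonedaEquiv σ).1) (joinPt_δ i)

lemma δ_last_comp_homEquiv {n : ℕ} (σ : Δ[n] ⟶ Slice C X) :
    stdSimplex.δ (Fin.last (n + 1)) ≫ (homEquiv σ).1 = σ ≫ sliceProj C X := by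
  refine yonedaEquiv.injective ?_
  rw [stdSimplex.yonedaEquiv_δ_comp, yonedaEquiv_homEquiv, yonedaEquiv_comp]
  refine congr_arg (fun f ↦ C.map (Quiver.Hom.op f) (yonedaEquiv σ).1) ?_
  ext j : 3
  exact Fin.succAbove_last_apply j

/-- The faces of the horn `Λ[n + 2, i] ⟶ C` that corresponds to a lifting problem `(t, b)` of
`Λ[n + 1, i]` against `C_{/X} ⟶ C`: those through the final vertex come from `t`, the face opposite
to it is `b`. -/
def hornFaces {n : ℕ} {i : Fin (n + 2)} (t : (Λ[n + 1, i] : SSet) ⟶ Slice C X)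
    (b : Δ[n + 1] ⟶ C) (j : Fin (n + 3)) (hj : j ≠ i.castSucc) : Δ[n + 1] ⟶ C :=
  Fin.lastCases (motive := fun j ↦ j ≠ i.castSucc → (Δ[n + 1] ⟶ C)) (fun _ ↦ b)
    (fun j hj ↦ (homEquiv (horn.ι i j (fun h ↦ hj (h ▸ rfl)) ≫ t)).1) j hj

lemma isCompatible_hornFaces {n : ℕ} {i : Fin (n + 2)}
    {t : (Λ[n + 1, i] : SSet) ⟶ Slice C X} {b : Δ[n + 1] ⟶ C}
    (sq : CommSq t Λ[n + 1, i].ι (sliceProj C X) b) :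
    horn.IsCompatible (hornFaces t b) := by
  rw [horn.isCompatible_iff]
  intro j k hj hk hjk
  obtain ⟨j, rfl⟩ := j.eq_castSucc_of_ne_last (Fin.ne_last_of_lt hjk)
  simp only [hornFaces, Fin.lastCases_castSucc, Fin.castPred_castSucc]
  induction k using Fin.lastCases with
  | last =>
    rw [Fin.lastCases_last, Fin.pred_last, δ_last_comp_homEquiv, Category.assoc, sq.w,
      horn.ι_ι_assoc]
  | cast k =>
    rw [Fin.lastCases_castSucc]
    have hjk : j < k := hjk
    have hj : j ≠ i := fun h ↦ hj (h ▸ rfl)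
    have hk : k ≠ i := fun h ↦ hk (h ▸ rfl)
    obtain _ | n := n
    · omega
    have h := (horn.IsCompatible.of_hom t).δ_pred_comp j k
    obtain ⟨j, rfl⟩ := j.eq_castSucc_of_ne_last (Fin.ne_last_of_lt hjk)
    obtain ⟨k, rfl⟩ := k.eq_succ_of_ne_zero (Fin.ne_zero_of_lt hjk)
    simp only [← Fin.succ_castSucc, Fin.pred_succ, Fin.castPred_castSucc] at h ⊢
    rw [← homEquiv_δ_comp, ← homEquiv_δ_comp, h]

end Slice

lemma hasLiftingProperty_sliceProj [Quasicategory C] {n : ℕ} {i : Fin (n + 2)} (h0 : 0 < i) :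
    HasLiftingProperty Λ[n + 1, i].ι (sliceProj C X) := by
  refine ⟨fun {t b} sq ↦ ?_⟩
  obtain ⟨φ, hφ⟩ := (Slice.isCompatible_hornFaces sq).exists_desc
  obtain ⟨y, rfl⟩ := Quasicategory.hornFilling (Fin.castSucc_pos h0) (Fin.castSucc_lt_last i) φ
  have hlast : stdSimplex.δ (Fin.last (n + 2)) ≫ y = b := by
    have := hφ (Fin.last (n + 2)) (Fin.castSucc_ne_last i).symm
    rwa [horn.ι_ι_assoc, Slice.hornFaces, Fin.lastCases_last] at this
  have hface (j : Fin (n + 2)) (hj : j ≠ i) :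
      stdSimplex.δ j.castSucc ≫ y = (Slice.homEquiv (horn.ι i j hj ≫ t)).1 := by
    have := hφ j.castSucc (Fin.castSucc_injective _ |>.ne hj)
    rwa [horn.ι_ι_assoc, Slice.hornFaces, Fin.lastCases_castSucc] at this
  have hapex : C.map (lastVtx ⦋n + 1⦌).op (yonedaEquiv y) = X := by
    rw [← Slice.map_lastVtx_δ_comp 0, hface 0 h0.ne]
    exact (Slice.homEquiv _).2
  obtain ⟨σ, hσ⟩ := Slice.homEquiv.surjective ⟨y, hapex⟩
  refine ⟨⟨σ, horn.hom_ext' fun j hj ↦ Slice.homEquiv.injective (Subtype.ext ?_), ?_⟩⟩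
  · rw [horn.ι_ι_assoc, Slice.homEquiv_δ_comp, hσ, hface j hj]
  · rw [← Slice.δ_last_comp_homEquiv, hσ, hlast]

lemma rightFibrations_sliceProj (C : SSet.{u}) [Quasicategory C] (X : C _⦋0⦌) :
    rightFibrations (sliceProj C X) := by
  rintro _ _ _ ⟨_, h0⟩
  exact hasLiftingProperty_sliceProj h0

namespace RightHom

variable {X' : C _⦋0⦌}

/-- The inclusion of `Hom_C(X', X)` into `C_{/X}` as the fibre over `X'`. -/
def toSlice (X' X : C _⦋0⦌) : RightHom C X' X ⟶ Slice C X where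
  app _ := ↾fun σ ↦ ⟨σ.1, σ.2.2⟩

lemma toSlice_comp_sliceProj (X' X : C _⦋0⦌) : toSlice X' X ≫ sliceProj C X = SSet.const X' :=
  NatTrans.ext <| funext fun _ ↦ ConcreteCategory.hom_ext _ _ fun σ ↦ σ.2.1

instance : Mono (toSlice X' X) :=
  (NatTrans.mono_iff_mono_app _).2 fun _ ↦ (mono_iff_injective _).2 fun _ _ h ↦
    Subtype.ext (congr_arg (fun σ : (Slice C X).obj _ ↦ σ.1) h)

/-- The universal property of `Hom_C(X', X)` as the fibre of `C_{/X} ⟶ C` over `X'`. -/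
def lift {K : SSet.{u}} (f : K ⟶ Slice C X) (hf : f ≫ sliceProj C X = SSet.const X') :
    K ⟶ RightHom C X' X where
  app a := ↾fun x ↦
    ⟨(f.app a x).1, ConcreteCategory.congr_hom (congr_app hf a) x, (f.app a x).2⟩
  naturality _ _ g := by
    refine ConcreteCategory.hom_ext _ _ fun x ↦ Subtype.ext ?_
    exact congr_arg (fun σ : (Slice C X).obj _ ↦ σ.1)
      (ConcreteCategory.congr_hom (f.naturality g) x)

lemma lift_comp_toSlice {K : SSet.{u}} (f : K ⟶ Slice C X)
    (hf : f ≫ sliceProj C X = SSet.const X') :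
    lift f hf ≫ toSlice X' X = f :=
  rfl

end RightHom

end

lemma isContractible_rightHom_iff {C : SSet.{0}} {X' X : C _⦋0⦌} :
    IsContractible (RightHom C X' X) ↔
      ∀ n, HasLiftingPropertyFixedBot ∂Δ[n].ι (sliceProj C X) (SSet.const X') := by
  constructor
  · intro h n t sq
    obtain ⟨l, hl⟩ := h n (RightHom.lift t sq.w)
    refine ⟨⟨l ≫ RightHom.toSlice X' X, ?_, ?_⟩⟩
    · rw [← Category.assoc, hl]
      exact RightHom.lift_comp_toSlice t sq.w
    · rw [Category.assoc, RightHom.toSlice_comp_sliceProj, comp_const]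
  · intro h n t
    have sq : CommSq (t ≫ RightHom.toSlice X' X) ∂Δ[n].ι (sliceProj C X) (SSet.const X') :=
      ⟨by rw [Category.assoc, RightHom.toSlice_comp_sliceProj, comp_const, comp_const]⟩
    have := h n _ sq
    refine ⟨RightHom.lift sq.lift sq.fac_right, ?_⟩
    rw [← cancel_mono (RightHom.toSlice X' X), Category.assoc, RightHom.lift_comp_toSlice,
      sq.fac_left]

lemma hasContractibleFibers_sliceProj_iff {C : SSet.{0}} {X : C _⦋0⦌} :
    HasContractibleFibers (sliceProj C X) ↔ ∀ X', IsContractible (RightHom C X' X) := by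
  simp only [isContractible_rightHom_iff]
  exact forall_comm

lemma IsContractible.kanComplex {S : SSet.{0}} (hS : IsContractible S) : KanComplex S where
  hornFilling n i σ₀ := by
    have h : modelCategoryQuillen.I.{0}.rlp (terminal.from S) := by
      rintro _ _ _ ⟨n⟩
      refine ⟨fun {t _} _ ↦ ?_⟩
      obtain ⟨l, hl⟩ := hS n t
      exact ⟨⟨⟨l, hl, Subsingleton.elim _ _⟩⟩⟩
    rw [← rlp_monomorphisms] at h
    have := h Λ[n, i].ι (MorphismProperty.monomorphisms.infer_property _)
    have sq : CommSq σ₀ Λ[n, i].ι (terminal.from S) (terminal.from Δ[n]) :=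
      ⟨Subsingleton.elim _ _⟩
    exact ⟨sq.lift, sq.fac_left.symm⟩

end SSetPaper

/-!
STATEMENT 2: Let `C` be a quasicategory.  An object `X` of `C` is a terminal object,
i.e. the projection `C_{/X} → C` is a trivial Kan fibration, if and only if for every
object `X'` of `C` the mapping space `Hom_C(X', X)` is a contractible Kan complex.
-/

open SSetPaper in
theorem isTerminalObject_iff_mapping_spaces_contractible
    (C : SSet.{0}) [SSet.Quasicategory C] (X : C _⦋0⦌) :
    IsTerminalObject C X ↔
      ∀ X' : C _⦋0⦌,
        IsContractible (RightHom C X' X) ∧ SSetPaper.KanComplex (RightHom C X' X) := by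
  rw [IsTerminalObject,
    isTrivialKanFibration_iff_hasContractibleFibers (rightFibrations_sliceProj C X),
    hasContractibleFibers_sliceProj_iff]
  exact forall_congr' fun _ ↦ ⟨fun h ↦ ⟨h, h.kanComplex⟩, And.left⟩
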